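/- Let Ω ⊂ ℝ^d be a bounded domain with C² boundary, T > 0, and let (ρ, u) be a distributional solution of the isentropic compressible Euler system ∂_t(ρu) + div(ρu⊗u) + ∇p(ρ) = 0, ∂_tρ + div(ρu) = 0 in (0,T)×Ω with impermeability boundary condition u·n = 0 on (0,T)×∂Ω, where n is the outward unit normal. Assume ρ, u, p satisfy conditions under which the local energy equality holds, i.e. for every φ ∈ C_c^∞((0,T)×Ω): ∫₀^T∫_Ω [∂_tφ (½ρ|u|² + P(ρ)) + ∇φ·((½ρ|u|² + p(ρ) + P(ρ))u)] dx dt = 0. Assume further ρ ∈ L^∞((0,T)×∂Ω) and that u·n is continuous at the boundary. Then the energy is globally conserved in space: for every Θ ∈ C_c^∞(0,T), ∫₀^T ∂_tΘ(t) ∫_Ω (½ρ|u|² + P(ρ)) dx dt = 0. -/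

import Mathlib

/-!
The local energy equality is tested with `φ(t, x) = Θ(t) χ_ε(x)`, where `χ_ε = η(-f / ε)` equals
`1` except in the boundary layer `L_ε = {-2ε ≤ f < 0}` and vanishes near the boundary.  As
`ε → 0` the bulk term converges to `∫∫ Θ' E`, with `E = ½ρ|u|² + P(ρ)`, by dominated convergence.
The flux term is `∫ Θ ∫_{L_ε} W · ∇χ_ε` with `W = (E + p(ρ)) u`; it is bounded by
`ε⁻¹ |L_ε| sup_{L_ε} |W · ∇f|`, up to a constant, for each time.

* `layer_volume`: `|L_ε| = O(ε)`.  Near a boundary point, `f` grows at a definite rate in the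
  direction `v = ∇f(x₀)`, so translates of the layer by multiples of a vector of length `∼ ε`
  along `v` are pairwise disjoint; about `1 / ε` of them fit into a fixed ball.
* For each fixed `t`, compactness of the boundary makes the pointwise trace condition uniform
  (`exists_layer_subset`), hence `sup_{L_ε} |W · ∇f| → 0`; dominated convergence in `t` finishes
  (`integral_eq_zero_of_normal_trace`).
* Since `f` is only `C²`, so is `χ_ε`; mollification (`exists_smooth_approx`) extends the local
  equality to spatial cutoffs of class `C¹` (`weak_identity_of_contDiff_one`).
* All densities are bounded because `P` is bounded and measurable on bounded sets
  (`exists_bound_Ppot`, `measurable_Ppot`), vacuum and negative arguments included.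
-/

open MeasureTheory Set ENNReal RealInnerProductSpace

noncomputable section

/-- Euclidean space `ℝ^d`. -/
abbrev Euc (d : ℕ) := EuclideanSpace ℝ (Fin d)

/-- Test functions on `(0,T) × Ω`: smooth and compactly supported inside `(0,T) × Ω`. -/
def IsTestFunOn {d : ℕ} {F : Type*} [NormedAddCommGroup F] [NormedSpace ℝ F]
    (T : ℝ) (Ω : Set (Euc d)) (φ : ℝ × Euc d → F) : Prop :=
  ContDiff ℝ (⊤ : ℕ∞) φ ∧ HasCompactSupport φ ∧ tsupport φ ⊆ Ioo 0 T ×ˢ Ω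

/-- The pressure potential `P(s) = s ∫_1^s pr(r)/r² dr`. -/
def Ppot (pr : ℝ → ℝ) (s : ℝ) : ℝ := s * ∫ r in (1 : ℝ)..s, pr r / r ^ 2

/-- `(ρ, u)` is a distributional (weak) solution of the isentropic compressible Euler
system `∂ₜ(ρu) + div(ρu ⊗ u) + ∇(pr(ρ)) = 0`, `∂ₜρ + div(ρu) = 0` in `(0,T) × Ω`. -/
def IsEulerSolutionOn {d : ℕ} (T : ℝ) (Ω : Set (Euc d)) (pr : ℝ → ℝ)
    (ρ : ℝ × Euc d → ℝ) (u : ℝ × Euc d → Euc d) : Prop :=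
  -- momentum equation
  (∀ φ : ℝ × Euc d → Euc d, IsTestFunOn T Ω φ →
    ∫ z in Ioo 0 T ×ˢ Ω,
      ((∑ j, ρ z * u z j * fderiv ℝ φ z ((1 : ℝ), (0 : Euc d)) j)
        + (∑ i, ∑ j, ρ z * u z i * u z j *
            fderiv ℝ φ z ((0 : ℝ), EuclideanSpace.single i (1 : ℝ)) j)
        + pr (ρ z) * ∑ i, fderiv ℝ φ z ((0 : ℝ), EuclideanSpace.single i (1 : ℝ)) i) = 0) ∧
  -- continuity equation
  (∀ ψ : ℝ × Euc d → ℝ, IsTestFunOn T Ω ψ →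
    ∫ z in Ioo 0 T ×ˢ Ω,
      (ρ z * fderiv ℝ ψ z ((1 : ℝ), (0 : Euc d))
        + ∑ i, ρ z * u z i * fderiv ℝ ψ z ((0 : ℝ), EuclideanSpace.single i (1 : ℝ))) = 0)

/-- The local energy equality on `(0,T) × Ω`: for every `φ ∈ C_c^∞((0,T) × Ω)`,
`∫∫ [∂ₜφ (½ρ|u|² + P(ρ)) + ∇φ · ((½ρ|u|² + pr(ρ) + P(ρ)) u)] dx dt = 0`. -/
def LocalEnergyEquality {d : ℕ} (T : ℝ) (Ω : Set (Euc d)) (pr : ℝ → ℝ)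
    (ρ : ℝ × Euc d → ℝ) (u : ℝ × Euc d → Euc d) : Prop :=
  ∀ φ : ℝ × Euc d → ℝ, IsTestFunOn T Ω φ →
    ∫ z in Ioo 0 T ×ˢ Ω,
      (fderiv ℝ φ z ((1 : ℝ), (0 : Euc d)) * (2⁻¹ * ρ z * ‖u z‖ ^ 2 + Ppot pr (ρ z))
        + ∑ i, fderiv ℝ φ z ((0 : ℝ), EuclideanSpace.single i (1 : ℝ)) *
            ((2⁻¹ * ρ z * ‖u z‖ ^ 2 + pr (ρ z) + Ppot pr (ρ z)) * u z i)) = 0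

/-- `f` is a `C²` defining function for the bounded domain `Ω`:
`Ω = {f < 0}`, `∂Ω = {f = 0}` and `∇f ≠ 0` on `∂Ω`.  Its normalised gradient is the
outward unit normal. -/
def IsC2DefiningFunction {d : ℕ} (Ω : Set (Euc d)) (f : Euc d → ℝ) : Prop :=
  ContDiff ℝ 2 f ∧ Ω = {x | f x < 0} ∧ frontier Ω = {x | f x = 0} ∧
    ∀ x ∈ frontier Ω, gradient f x ≠ 0

/-- The outward unit normal to `Ω = {f < 0}`. -/
def outerNormal {d : ℕ} (f : Euc d → ℝ) (x : Euc d) : Euc d :=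
  ‖gradient f x‖⁻¹ • gradient f x

section Helpers

open Filter Topology

/-! ### Geometry of the boundary layer -/

/-- A neighbourhood `U` of the boundary contains a whole layer `{-c ≤ f < 0}`: on the compact set
`closure Ω \ interior U` the function `f` has a negative maximum. -/
lemma exists_layer_subset {d : ℕ} {Ω : Set (Euc d)} (hΩbdd : Bornology.IsBounded Ω)
    (hΩopen : IsOpen Ω)
    {f : Euc d → ℝ} (hfc : Continuous f) (hΩ : Ω = {x | f x < 0})
    {U : Set (Euc d)} (hU : ∀ x ∈ frontier Ω, U ∈ 𝓝 x) :
    ∃ c > 0, ∀ x ∈ Ω, -c ≤ f x → x ∈ U := by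
  have hK : IsCompact (closure Ω \ interior U) :=
    hΩbdd.isCompact_closure.diff isOpen_interior
  have hneg : ∀ x ∈ closure Ω \ interior U, f x < 0 := by
    rintro x ⟨hx, hxU⟩
    have hxΩ : x ∈ Ω := by
      by_contra hn
      have : x ∈ frontier Ω := by
        rw [hΩopen.frontier_eq]; exact ⟨hx, hn⟩
      exact hxU (mem_interior_iff_mem_nhds.2 (hU x this))
    rw [hΩ] at hxΩ
    exact hxΩ
  rcases (closure Ω \ interior U).eq_empty_or_nonempty with he | hne
  · refine ⟨1, one_pos, fun x hx _ => ?_⟩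
    by_contra hn
    have : x ∈ closure Ω \ interior U :=
      ⟨subset_closure hx, fun h => hn (interior_subset h)⟩
    rw [he] at this
    exact this
  · obtain ⟨y, hy, hmax⟩ := hK.exists_isMaxOn hne hfc.continuousOn
    refine ⟨-f y / 2, by linarith [hneg y hy], fun x hx hfx => ?_⟩
    by_contra hn
    have hxK : x ∈ closure Ω \ interior U :=
      ⟨subset_closure hx, fun h => hn (interior_subset h)⟩
    have h1 : f x ≤ f y := hmax hxK
    linarith [hneg y hy]

/-- Packing argument: with `v = ∇f(x₀)`, the translates of the layer by `k h v`, `k < N`, with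
`h ∼ ε` and `N ∼ 1 / ε`, are pairwise disjoint and contained in a fixed ball. -/
lemma local_layer_volume {d : ℕ} {f : Euc d → ℝ} (hf : ContDiff ℝ 2 f) {x₀ : Euc d}
    (hx₀ : gradient f x₀ ≠ 0) :
    ∃ r > 0, ∃ C, ∃ ε₀ > 0, ∀ ε, 0 < ε → ε < ε₀ →
      volume.real (Metric.ball x₀ r ∩ {x | -ε ≤ f x ∧ f x < 0}) ≤ C * ε := by
  set v := gradient f x₀ with hv
  have hvpos : 0 < ‖v‖ := norm_pos_iff.2 hx₀
  have hdiff : Differentiable ℝ f := hf.differentiable (by norm_num)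
  have hcont : Continuous fun x => fderiv ℝ f x v :=
    (hf.continuous_fderiv (by norm_num)).clm_apply continuous_const
  have hval : fderiv ℝ f x₀ v = ‖v‖ ^ 2 := by
    rw [← real_inner_self_eq_norm_sq]
    conv_rhs => rw [hv, gradient, InnerProductSpace.toDual_symm_apply]
    rfl
  set m := ‖v‖ ^ 2 / 2 with hm
  have hmpos : 0 < m := by positivity
  have hev : ∀ᶠ x in 𝓝 x₀, m < fderiv ℝ f x v :=
    hcont.continuousAt.eventually_const_lt (by
      change m < fderiv ℝ f x₀ v
      rw [hval, hm]; nlinarith [pow_pos hvpos 2])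
  obtain ⟨r, hr, hball⟩ := Metric.eventually_nhds_iff_ball.1 hev
  set V := volume.real (Metric.ball x₀ (2 * r)) with hV
  have hV0 : 0 ≤ V := measureReal_nonneg
  refine ⟨r, hr, 4 * ‖v‖ * V / (r * m), r * m / (4 * ‖v‖), by positivity, fun ε hε hε₀ => ?_⟩
  set A := Metric.ball x₀ r ∩ {x | -ε ≤ f x ∧ f x < 0} with hA
  have hAm : MeasurableSet A := by
    refine measurableSet_ball.inter ?_
    exact (measurableSet_le measurable_const hf.continuous.measurable).inter
      (measurableSet_lt hf.continuous.measurable measurable_const)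
  set h := 2 * ε / m with hh
  have hhpos : 0 < h := by positivity
  set q := r / (h * ‖v‖) with hq
  have hq2 : 2 ≤ q := by
    rw [hq, le_div_iff₀ (by positivity), hh]
    rw [lt_div_iff₀ (by positivity)] at hε₀
    rw [show 2 * (2 * ε / m * ‖v‖) = (ε * (4 * ‖v‖)) / m by ring, div_le_iff₀ hmpos]
    exact hε₀.le
  set N := ⌊q⌋₊ with hN
  have hNq : (N : ℝ) ≤ q := Nat.floor_le (by linarith)
  have hNq' : q / 2 ≤ N := by
    have := Nat.lt_floor_add_one q
    linarith
  set S : ℕ → Set (Euc d) := fun k => (fun x => x + (-((k : ℝ) * h)) • v) ⁻¹' A with hS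
  have hSm : ∀ k, MeasurableSet (S k) := fun k => hAm.preimage (measurable_add_const _)
  have hSvol : ∀ k, volume (S k) = volume A := fun k => measure_preimage_add_right _ _ _
  -- Inside the ball, moving by `s • v` with `s ≥ h` raises `f` by at least `h * m = 2 * ε`, more than
  -- the width of the layer.
  have key : ∀ k l : ℕ, k < l → Disjoint (S k) (S l) := by
    intro k l hkl
    rw [Set.disjoint_left]
    intro x hxk hxl
    set a := x + (-((l : ℝ) * h)) • v
    set b := x + (-((k : ℝ) * h)) • v
    have ha : a ∈ A := hxl
    have hb : b ∈ A := hxk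
    have hba : b - a = (((l : ℝ) - k) * h) • v := by
      simp only [a, b]; module
    obtain ⟨z, hz, hzeq⟩ := domain_mvt (f := f) (f' := fderiv ℝ f)
      (fun y _ => (hdiff y).hasFDerivAt.hasFDerivWithinAt) (convex_ball x₀ r) ha.1 hb.1
    have hzb : z ∈ Metric.ball x₀ r := (convex_ball x₀ r).segment_subset ha.1 hb.1 hz
    have hz' := hball z hzb
    rw [hba, map_smul, smul_eq_mul] at hzeq
    have hkl' : (1 : ℝ) ≤ (l : ℝ) - k := by
      have : (k : ℝ) + 1 ≤ l := by exact_mod_cast hkl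
      linarith
    have h1 : h * m ≤ ((l : ℝ) - k) * h * fderiv ℝ f z v := by
      have : h ≤ ((l : ℝ) - k) * h := by nlinarith
      exact mul_le_mul this hz'.le hmpos.le (by linarith)
    have h2 : h * m = 2 * ε := by rw [hh]; field_simp
    have h3 := ha.2.1
    have h4 := hb.2.2
    linarith
  have hdisj : PairwiseDisjoint (↑(Finset.range N)) S := by
    intro k _ l _ hkl
    rcases lt_or_gt_of_ne hkl with hlt | hlt
    · exact key k l hlt
    · exact (key l k hlt).symm
  have hsub : (⋃ k ∈ Finset.range N, S k) ⊆ Metric.ball x₀ (2 * r) := by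
    intro x hx
    simp only [mem_iUnion, Finset.mem_range] at hx
    obtain ⟨k, hk, hxk⟩ := hx
    have h1 : ‖x + (-((k : ℝ) * h)) • v - x₀‖ < r := by
      have := hxk.1
      rwa [mem_ball_iff_norm] at this
    have h2 : ‖((k : ℝ) * h) • v‖ ≤ r := by
      rw [norm_smul, Real.norm_of_nonneg (by positivity)]
      have : (k : ℝ) ≤ q := le_trans (by exact_mod_cast hk.le) hNq
      rw [hq, le_div_iff₀ (by positivity)] at this
      linarith
    rw [mem_ball_iff_norm]
    calc ‖x - x₀‖ = ‖(x + (-((k : ℝ) * h)) • v - x₀) + ((k : ℝ) * h) • v‖ := by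
          congr 1; module
      _ ≤ _ := norm_add_le _ _
      _ < 2 * r := by linarith
  have hsum : (N : ℝ) * volume.real A ≤ V := by
    have h1 : (N : ℝ≥0∞) * volume A ≤ volume (Metric.ball x₀ (2 * r)) := by
      refine le_trans (le_of_eq ?_) (measure_mono hsub)
      rw [measure_biUnion_finset hdisj fun k _ => hSm k]
      simp [hSvol]
    have h2 := ENNReal.toReal_mono measure_ball_lt_top.ne h1
    rw [ENNReal.toReal_mul, ENNReal.toReal_natCast] at h2
    exact h2
  have hA0 : 0 ≤ volume.real A := measureReal_nonneg
  have h5 : q / 2 * volume.real A ≤ V := (mul_le_mul_of_nonneg_right hNq' hA0).trans hsum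
  have h6 : q / 2 = r * m / (4 * ‖v‖ * ε) := by rw [hq, hh]; field_simp; norm_num
  rw [h6, div_mul_eq_mul_div, div_le_iff₀ (by positivity)] at h5
  rw [div_mul_eq_mul_div, le_div_iff₀ (by positivity)]
  linarith

/-- The boundary layer of width `ε` (measured by `f`) has volume `O(ε)`. -/
lemma layer_volume {d : ℕ} {Ω : Set (Euc d)} (hΩbdd : Bornology.IsBounded Ω)
    (hΩopen : IsOpen Ω) {f : Euc d → ℝ} (hf : ContDiff ℝ 2 f) (hΩ : Ω = {x | f x < 0})
    (hgrad : ∀ x ∈ frontier Ω, gradient f x ≠ 0) :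
    ∃ C, ∃ ε₀ > 0, ∀ ε, 0 < ε → ε < ε₀ →
      volume.real {x | -ε ≤ f x ∧ f x < 0} ≤ C * ε := by
  have hcpt : IsCompact (frontier Ω) :=
    hΩbdd.isCompact_closure.of_isClosed_subset isClosed_frontier frontier_subset_closure
  have hp : ∃ U, IsOpen U ∧ frontier Ω ⊆ U ∧ ∃ C, ∃ ε₀ > 0, ∀ ε, 0 < ε → ε < ε₀ →
      volume.real (U ∩ {x | -ε ≤ f x ∧ f x < 0}) ≤ C * ε := by
    refine hcpt.induction_on (p := fun s => ∃ U, IsOpen U ∧ s ⊆ U ∧ ∃ C, ∃ ε₀ > 0,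
      ∀ ε, 0 < ε → ε < ε₀ → volume.real (U ∩ {x | -ε ≤ f x ∧ f x < 0}) ≤ C * ε) ?_ ?_ ?_ ?_
    · exact ⟨∅, isOpen_empty, subset_rfl, 0, 1, one_pos, by simp⟩
    · rintro s t hst ⟨U, hU, htU, h⟩
      exact ⟨U, hU, hst.trans htU, h⟩
    · rintro s t ⟨U, hU, hsU, C, e, he, h⟩ ⟨U', hU', htU', C', e', he', h'⟩
      refine ⟨U ∪ U', hU.union hU', union_subset_union hsU htU', C + C', min e e',
        lt_min he he', fun ε hε hε' => ?_⟩
      rw [union_inter_distrib_right]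
      refine (measureReal_union_le _ _).trans ?_
      have h1 := h ε hε (hε'.trans_le (min_le_left _ _))
      have h2 := h' ε hε (hε'.trans_le (min_le_right _ _))
      linarith
    · intro x hx
      obtain ⟨r, hr, C, e, he, h⟩ := local_layer_volume hf (hgrad x hx)
      exact ⟨Metric.ball x r, mem_nhdsWithin_of_mem_nhds (Metric.ball_mem_nhds x hr),
        Metric.ball x r, Metric.isOpen_ball, subset_rfl, C, e, he, h⟩
  obtain ⟨U, hU, hsU, C, e, he, h⟩ := hp
  obtain ⟨c, hc, hcU⟩ := exists_layer_subset hΩbdd hΩopen hf.continuous hΩ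
    (fun x hx => hU.mem_nhds (hsU hx))
  refine ⟨C, min e c, lt_min he hc, fun ε hε hε' => ?_⟩
  have hin : U ∩ {x | -ε ≤ f x ∧ f x < 0} = {x | -ε ≤ f x ∧ f x < 0} := by
    refine inter_eq_right.2 fun x hx => hcU x (by rw [hΩ]; exact hx.2) ?_
    have := hε'.trans_le (min_le_right e c)
    linarith [hx.1]
  rw [← hin]
  exact h ε hε (hε'.trans_le (min_le_left _ _))

/-! ### Smooth approximation of cutoffs -/

/-- A compactly supported `C¹` function on `Ω` is approximated in the `C¹` norm by test functions
on `Ω`, by convolution with a bump function of small support. -/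
lemma exists_smooth_approx {d : ℕ} {Ω : Set (Euc d)} (hΩopen : IsOpen Ω)
    {χ : Euc d → ℝ} (hχ : ContDiff ℝ 1 χ) (hcs : HasCompactSupport χ) (hsub : tsupport χ ⊆ Ω)
    {δ : ℝ} (hδ : 0 < δ) :
    ∃ χ' : Euc d → ℝ, ContDiff ℝ (⊤ : ℕ∞) χ' ∧ HasCompactSupport χ' ∧ tsupport χ' ⊆ Ω ∧
      (∀ x, |χ' x - χ x| ≤ δ) ∧ ∀ x, ‖fderiv ℝ χ' x - fderiv ℝ χ x‖ ≤ δ := by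
  have huc : UniformContinuous χ := hcs.uniformContinuous_of_continuous hχ.continuous
  have hDc : Continuous (fderiv ℝ χ) := hχ.continuous_fderiv (by norm_num)
  have hDuc : UniformContinuous (fderiv ℝ χ) :=
    (hcs.fderiv (𝕜 := ℝ)).uniformContinuous_of_continuous hDc
  obtain ⟨r₁, hr₁, h₁⟩ := Metric.uniformContinuous_iff.1 huc δ hδ
  obtain ⟨r₂, hr₂, h₂⟩ := Metric.uniformContinuous_iff.1 hDuc δ hδ
  obtain ⟨r₃, hr₃, h₃⟩ := hcs.isCompact.exists_cthickening_subset_open hΩopen hsub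
  set r := min r₁ (min r₂ r₃) with hr
  have hrpos : 0 < r := lt_min hr₁ (lt_min hr₂ hr₃)
  let ψ : ContDiffBump (0 : Euc d) := ⟨r / 2, r, by positivity, by linarith⟩
  have hψr : ψ.rOut = r := rfl
  have hψc : HasCompactSupport (ψ.normed volume) := ψ.hasCompactSupport_normed
  have hψi : LocallyIntegrable (ψ.normed volume) volume := ψ.continuous_normed.locallyIntegrable
  have hsupp : tsupport (convolution (ψ.normed volume) χ (ContinuousLinearMap.lsmul ℝ ℝ) volume)
      ⊆ Metric.cthickening r (tsupport χ) := by
    refine closure_minimal ?_ Metric.isClosed_cthickening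
    refine (support_convolution_subset_swap _).trans ?_
    rintro _ ⟨y, hy, w, hw, rfl⟩
    rw [ψ.support_normed_eq, hψr, mem_ball_zero_iff] at hw
    refine Metric.mem_cthickening_of_dist_le _ y _ _ (subset_tsupport _ hy) ?_
    simpa [dist_eq_norm] using hw.le
  refine ⟨convolution (ψ.normed volume) χ (ContinuousLinearMap.lsmul ℝ ℝ) volume,
    ?_, hψc.convolution _ hcs, ?_, ?_, ?_⟩
  · exact hψc.contDiff_convolution_left _ ψ.contDiff_normed hχ.continuous.locallyIntegrable
  · refine hsupp.trans ((Metric.cthickening_mono ?_ _).trans h₃)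
    exact (min_le_right _ _).trans (min_le_right _ _)
  · intro x
    rw [← Real.dist_eq]
    refine ψ.dist_normed_convolution_le hχ.continuous.aestronglyMeasurable fun y hy => ?_
    rw [hψr, Metric.mem_ball] at hy
    exact (h₁ (hy.trans_le (min_le_left _ _))).le
  · intro x
    have hD := hcs.hasFDerivAt_convolution_right (ContinuousLinearMap.lsmul ℝ ℝ) hψi hχ x
    have hE : convolution (ψ.normed volume) (fderiv ℝ χ)
        ((ContinuousLinearMap.lsmul ℝ ℝ : ℝ →L[ℝ] ℝ →L[ℝ] ℝ).precompR (Euc d)) volume =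
        convolution (ψ.normed volume) (fderiv ℝ χ) (ContinuousLinearMap.lsmul ℝ ℝ) volume := by
      rfl
    rw [hD.fderiv, hE, ← dist_eq_norm]
    refine ψ.dist_normed_convolution_le hDc.aestronglyMeasurable fun y hy => ?_
    rw [hψr, Metric.mem_ball] at hy
    exact (h₂ (hy.trans_le ((min_le_right _ _).trans (min_le_left _ _)))).le

/-! ### The pressure potential -/

lemma intervalIntegrable_pressure_of_same_sign {pr : ℝ → ℝ} (hpr : Continuous pr) {a b : ℝ}
    (h : (0 : ℝ) ∉ uIcc a b) : IntervalIntegrable (fun r => pr r / r ^ 2) volume a b := by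
  refine ContinuousOn.intervalIntegrable (hpr.continuousOn.div (by fun_prop) ?_)
  intro x hx h0
  have : x = 0 := by simpa using h0
  exact h (this ▸ hx)

/-- Integrability across the singularity at `0` does not depend on the negative endpoint. -/
lemma intervalIntegrable_pressure_of_neg {pr : ℝ → ℝ} (hpr : Continuous pr) {a b : ℝ}
    (ha : a < 0) (hb : b < 0) (h : IntervalIntegrable (fun r => pr r / r ^ 2) volume 1 a) :
    IntervalIntegrable (fun r => pr r / r ^ 2) volume 1 b := by
  refine h.trans (intervalIntegrable_pressure_of_same_sign hpr fun h0 => ?_)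
  rw [mem_uIcc] at h0
  rcases h0 with h0 | h0 <;> linarith [h0.1, h0.2]

/-- The inner integral of `Ppot` is continuous off `0`: where the integrand is not integrable,
its junk value `0` persists in a neighbourhood. -/
lemma measurable_Ppot {pr : ℝ → ℝ} (hpr : Continuous pr) : Measurable (Ppot pr) := by
  refine measurable_id.mul (measurable_of_continuousOn_compl_singleton 0 ?_)
  intro s hs
  have hs0 : s ≠ 0 := hs
  refine ContinuousAt.continuousWithinAt ?_
  have hgm : Measurable fun r => pr r / r ^ 2 := by
    have := hpr.measurable
    fun_prop
  by_cases hi : IntervalIntegrable (fun r => pr r / r ^ 2) volume 1 s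
  · refine (intervalIntegral.integral_hasDerivAt_right hi
      hgm.stronglyMeasurable.stronglyMeasurableAtFilter ?_).continuousAt
    exact hpr.continuousAt.div (by fun_prop) (pow_ne_zero 2 hs0)
  · have hsneg : s < 0 := by
      by_contra hn
      have hpos : 0 < s := lt_of_le_of_ne (not_lt.1 hn) hs0.symm
      refine hi (intervalIntegrable_pressure_of_same_sign hpr fun h0 => ?_)
      rw [mem_uIcc] at h0
      rcases h0 with h0 | h0 <;> linarith [h0.1, h0.2]
    have hev : (fun s : ℝ => ∫ r in (1 : ℝ)..s, pr r / r ^ 2) =ᶠ[𝓝 s] fun _ => (0 : ℝ) := by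
      filter_upwards [Iio_mem_nhds hsneg] with b hb
      exact intervalIntegral.integral_undef fun h =>
        hi (intervalIntegrable_pressure_of_neg hpr hb hsneg h)
    exact continuousAt_const.congr hev.symm

/-- `P` is bounded on bounded sets.  For `s > 0` the factor `s` compensates the growth
`|∫_1^s p(r)/r² dr| ≤ K |1 - 1/s|`.  For `s < 0` either `p(r)/r²` is integrable across `0`, or
the integral has the junk value `0`. -/
lemma exists_bound_Ppot {pr : ℝ → ℝ} (hpr : Continuous pr) (C : ℝ) :
    ∃ M, ∀ s, |s| ≤ C → |Ppot pr s| ≤ M := by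
  obtain ⟨K, hK⟩ := (isCompact_Icc (a := (0 : ℝ)) (b := max C 1)).exists_bound_of_continuousOn
    hpr.continuousOn
  set B := ∫ r in Ioc (-(|C| + 1)) 1, ‖pr r / r ^ 2‖ with hB
  have hB0 : 0 ≤ B := integral_nonneg fun _ => norm_nonneg _
  have hK0 : 0 ≤ K := (norm_nonneg _).trans (hK 0 ⟨le_rfl, by positivity⟩)
  refine ⟨K * (|C| + 1) + |C| * B, fun s hs => ?_⟩
  have hC : 0 ≤ C := (abs_nonneg s).trans hs
  have hsC := abs_le.1 hs
  rw [abs_of_nonneg hC]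
  unfold Ppot
  rcases lt_trichotomy s 0 with hneg | rfl | hpos
  · by_cases hi : IntervalIntegrable (fun r => pr r / r ^ 2) volume 1 s
    · have hi' : IntervalIntegrable (fun r => pr r / r ^ 2) volume 1 (-(|C| + 1)) :=
        intervalIntegrable_pressure_of_neg hpr hneg (by linarith [abs_nonneg C]) hi
      have h1 : |∫ r in (1 : ℝ)..s, pr r / r ^ 2| ≤ B := by
        rw [← Real.norm_eq_abs]
        refine intervalIntegral.norm_integral_le_integral_norm_uIoc.trans ?_
        refine setIntegral_mono_set ?_ (ae_of_all _ fun _ => norm_nonneg _) ?_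
        · exact hi'.symm.1.norm
        · rw [uIoc_of_ge (by linarith)]
          exact (Ioc_subset_Ioc_left (by rw [abs_of_nonneg hC]; linarith)).eventuallyLE
      rw [abs_mul]
      have h2 : |s| * |∫ r in (1 : ℝ)..s, pr r / r ^ 2| ≤ C * B :=
        mul_le_mul hs h1 (abs_nonneg _) hC
      have : 0 ≤ K * (C + 1) := by positivity
      linarith
    · rw [intervalIntegral.integral_undef hi]
      simp only [mul_zero, abs_zero]
      positivity
  · simp only [zero_mul, abs_zero]
    positivity
  · have h0 : (0 : ℝ) ∉ uIcc 1 s := by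
      intro h0
      rw [mem_uIcc] at h0
      rcases h0 with h0 | h0 <;> linarith [h0.1, h0.2]
    have hint : (∫ r in (1 : ℝ)..s, K * r ^ (-2 : ℤ)) = K * (1 - s⁻¹) := by
      rw [intervalIntegral.integral_const_mul, integral_zpow (Or.inr ⟨by norm_num, h0⟩)]
      norm_num
      left; ring
    have h1 : |∫ r in (1 : ℝ)..s, pr r / r ^ 2| ≤ |K * (1 - s⁻¹)| := by
      rw [← hint, ← Real.norm_eq_abs (∫ r in (1 : ℝ)..s, pr r / r ^ 2)]
      refine intervalIntegral.norm_integral_le_abs_of_norm_le ?_ ?_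
      · refine ae_restrict_of_forall_mem measurableSet_uIoc fun r hr => ?_
        have hr' : r ∈ Icc 0 (max C 1) := by
          have := uIoc_subset_uIcc hr
          rw [mem_uIcc] at this
          have h3 := le_max_left C 1
          have h4 := le_max_right C 1
          constructor <;> rcases this with h | h <;> linarith [h.1, h.2, hsC.2]
        rw [norm_div, norm_pow, Real.norm_eq_abs r, sq_abs, div_eq_mul_inv]
        rw [zpow_neg]
        exact mul_le_mul_of_nonneg_right (hK r hr') (by positivity)
      · refine ContinuousOn.intervalIntegrable (continuousOn_const.mul ?_)
        exact fun x hx => (continuousAt_zpow₀ x _ (Or.inl fun h => h0 (h ▸ hx))).continuousWithinAt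
    rw [abs_mul]
    have h2 : |s| * |K * (1 - s⁻¹)| = K * |s - 1| := by
      rw [abs_mul, abs_of_nonneg hK0, mul_left_comm, ← abs_mul]
      congr 2
      field_simp
    have h3 : |s - 1| ≤ C + 1 := by
      rw [abs_le]; constructor <;> linarith [hsC.1, hsC.2]
    calc |s| * |∫ r in (1 : ℝ)..s, pr r / r ^ 2| ≤ |s| * |K * (1 - s⁻¹)| := by gcongr
      _ = K * |s - 1| := h2
      _ ≤ K * (C + 1) := by gcongr
      _ ≤ _ := by
        have : 0 ≤ C * B := by positivity
        linarith

/-! ### Cutoffs of class C¹ in the weak identity -/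

lemma measure_cylinder_ne_top {d : ℕ} {Ω : Set (Euc d)} (hΩbdd : Bornology.IsBounded Ω) (T : ℝ) :
    volume (Ioo 0 T ×ˢ Ω) ≠ ∞ := by
  rw [Measure.volume_eq_prod, Measure.prod_prod]
  exact ENNReal.mul_ne_top (by simp) hΩbdd.measure_lt_top.ne

lemma integrableOn_cylinder {d : ℕ} {T : ℝ} {Ω : Set (Euc d)} (hΩbdd : Bornology.IsBounded Ω)
    (hΩopen : IsOpen Ω) {g : ℝ × Euc d → ℝ}
    (hg : AEStronglyMeasurable g (volume.restrict (Ioo 0 T ×ˢ Ω))) {M : ℝ}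
    (hM : ∀ z ∈ Ioo 0 T ×ˢ Ω, |g z| ≤ M) : IntegrableOn g (Ioo 0 T ×ˢ Ω) := by
  have : IsFiniteMeasure (volume.restrict (Ioo 0 T ×ˢ Ω)) :=
    isFiniteMeasure_restrict.2 (measure_cylinder_ne_top hΩbdd T)
  refine Integrable.of_bound hg M ?_
  exact ae_restrict_of_forall_mem (measurableSet_Ioo.prod hΩopen.measurableSet) hM

lemma aestronglyMeasurable_fderiv_apply {d : ℕ} {χ : Euc d → ℝ} (hχ : ContDiff ℝ 1 χ)
    {Θ : ℝ → ℝ} (hΘ : Continuous Θ) {W : ℝ × Euc d → Euc d} {μ : Measure (ℝ × Euc d)}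
    (hW : AEStronglyMeasurable W μ) :
    AEStronglyMeasurable (fun z => Θ z.1 * fderiv ℝ χ z.2 (W z)) μ := by
  have hD : Continuous (fderiv ℝ χ) := hχ.continuous_fderiv (by norm_num)
  have h1 : AEStronglyMeasurable (fun z : ℝ × Euc d => fderiv ℝ χ z.2) μ :=
    (hD.comp continuous_snd).aestronglyMeasurable
  have h2 : Continuous fun p : (Euc d →L[ℝ] ℝ) × Euc d => p.1 p.2 := by fun_prop
  exact (hΘ.comp continuous_fst).aestronglyMeasurable.mul
    (h2.comp_aestronglyMeasurable (h1.prodMk hW))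

/-- An identity tested with smooth spatial cutoffs extends to `C¹` cutoffs, its left-hand side being
continuous in the `C¹` norm. -/
lemma weak_identity_of_contDiff_one {d : ℕ} {T : ℝ} {Ω : Set (Euc d)}
    (hΩbdd : Bornology.IsBounded Ω) (hΩopen : IsOpen Ω)
    {E : ℝ × Euc d → ℝ} {W : ℝ × Euc d → Euc d}
    (hE : AEStronglyMeasurable E (volume.restrict (Ioo 0 T ×ˢ Ω)))
    (hW : AEStronglyMeasurable W (volume.restrict (Ioo 0 T ×ˢ Ω))) {M B : ℝ} (hM0 : 0 ≤ M)
    (hEM : ∀ z ∈ Ioo 0 T ×ˢ Ω, |E z| ≤ M) (hWM : ∀ z ∈ Ioo 0 T ×ˢ Ω, ‖W z‖ ≤ M)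
    {Θ Θ' : ℝ → ℝ} (hΘ : Continuous Θ) (hΘ' : Continuous Θ')
    (hΘB : ∀ t, |Θ t| ≤ B) (hΘB' : ∀ t, |Θ' t| ≤ B)
    (hloc : ∀ χ : Euc d → ℝ, ContDiff ℝ (⊤ : ℕ∞) χ → HasCompactSupport χ → tsupport χ ⊆ Ω →
      ∫ z in Ioo 0 T ×ˢ Ω, (Θ' z.1 * (χ z.2 * E z) + Θ z.1 * fderiv ℝ χ z.2 (W z)) = 0)
    {χ : Euc d → ℝ} (hχ : ContDiff ℝ 1 χ) (hcs : HasCompactSupport χ) (hsub : tsupport χ ⊆ Ω) :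
    IntegrableOn (fun z => Θ' z.1 * (χ z.2 * E z)) (Ioo 0 T ×ˢ Ω) ∧
    IntegrableOn (fun z => Θ z.1 * fderiv ℝ χ z.2 (W z)) (Ioo 0 T ×ˢ Ω) ∧
    ∫ z in Ioo 0 T ×ˢ Ω, (Θ' z.1 * (χ z.2 * E z) + Θ z.1 * fderiv ℝ χ z.2 (W z)) = 0 := by
  have hB0 : 0 ≤ B := (abs_nonneg _).trans (hΘB 0)
  have int1 : ∀ χ : Euc d → ℝ, ContDiff ℝ 1 χ → HasCompactSupport χ →
      IntegrableOn (fun z => Θ' z.1 * (χ z.2 * E z)) (Ioo 0 T ×ˢ Ω) := by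
    intro χ hχ hcs
    obtain ⟨K, hK⟩ := hcs.exists_bound_of_continuous hχ.continuous
    have hK0 := (norm_nonneg _).trans (hK 0)
    refine integrableOn_cylinder (M := B * (K * M)) hΩbdd hΩopen ?_ fun z hz => ?_
    · exact (hΘ'.comp continuous_fst).aestronglyMeasurable.mul
        ((hχ.continuous.comp continuous_snd).aestronglyMeasurable.mul hE)
    · rw [abs_mul, abs_mul]
      have := hK z.2
      rw [Real.norm_eq_abs] at this
      gcongr
      · exact hΘB' _
      · exact hEM z hz
  have int2 : ∀ χ : Euc d → ℝ, ContDiff ℝ 1 χ → HasCompactSupport χ →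
      IntegrableOn (fun z => Θ z.1 * fderiv ℝ χ z.2 (W z)) (Ioo 0 T ×ˢ Ω) := by
    intro χ hχ hcs
    obtain ⟨K, hK⟩ := (hcs.fderiv (𝕜 := ℝ)).exists_bound_of_continuous
      (hχ.continuous_fderiv (by norm_num))
    have hK0 := (norm_nonneg _).trans (hK 0)
    refine integrableOn_cylinder (M := B * (K * M)) hΩbdd hΩopen
      (aestronglyMeasurable_fderiv_apply hχ hΘ hW) fun z hz => ?_
    rw [abs_mul]
    have h1 : |fderiv ℝ χ z.2 (W z)| ≤ K * M := by
      refine ((fderiv ℝ χ z.2).le_opNorm (W z)).trans ?_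
      exact mul_le_mul (hK _) (hWM z hz) (norm_nonneg _) hK0
    exact mul_le_mul (hΘB _) h1 (abs_nonneg _) hB0
  refine ⟨int1 χ hχ hcs, int2 χ hχ hcs, ?_⟩
  set J := ∫ z in Ioo 0 T ×ˢ Ω, (Θ' z.1 * (χ z.2 * E z) + Θ z.1 * fderiv ℝ χ z.2 (W z)) with hJ
  set V := volume.real (Ioo 0 T ×ˢ Ω) with hV
  have hV0 : 0 ≤ V := measureReal_nonneg
  have hbound : ∀ δ > 0, |J| ≤ δ * (2 * B * M * V) := by
    intro δ hδ
    obtain ⟨χ', hs', hcs', hsub', h0, h1⟩ := exists_smooth_approx hΩopen hχ hcs hsub hδ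
    have hs1 : ContDiff ℝ 1 χ' := hs'.of_le (by exact_mod_cast le_top)
    have hz := hloc χ' hs' hcs' hsub'
    have hdiff : J = ∫ z in Ioo 0 T ×ˢ Ω,
        ((Θ' z.1 * (χ z.2 * E z) + Θ z.1 * fderiv ℝ χ z.2 (W z)) -
          (Θ' z.1 * (χ' z.2 * E z) + Θ z.1 * fderiv ℝ χ' z.2 (W z))) := by
      refine Eq.trans ?_ (integral_sub ((int1 χ hχ hcs).add (int2 χ hχ hcs))
        ((int1 χ' hs1 hcs').add (int2 χ' hs1 hcs'))).symm
      exact ((congrArg (J - ·) hz).trans (sub_zero J)).symm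
    rw [hdiff, ← Real.norm_eq_abs]
    refine (norm_setIntegral_le_of_norm_le_const (C := δ * (2 * B * M))
      (measure_cylinder_ne_top hΩbdd T).lt_top fun z hz => ?_).trans (le_of_eq (by ring))
    have e1 : (Θ' z.1 * (χ z.2 * E z) + Θ z.1 * fderiv ℝ χ z.2 (W z)) -
          (Θ' z.1 * (χ' z.2 * E z) + Θ z.1 * fderiv ℝ χ' z.2 (W z)) =
        -(Θ' z.1 * ((χ' z.2 - χ z.2) * E z) +
          Θ z.1 * (fderiv ℝ χ' z.2 - fderiv ℝ χ z.2) (W z)) := by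
      rw [sub_apply]; ring
    rw [e1, norm_neg]
    refine (norm_add_le _ _).trans ?_
    rw [norm_mul, norm_mul, norm_mul]
    have a1 : ‖Θ' z.1‖ * (‖χ' z.2 - χ z.2‖ * ‖E z‖) ≤ B * (δ * M) := by
      gcongr
      · exact hΘB' _
      · exact h0 _
      · exact hEM z hz
    have a2 : ‖Θ z.1‖ * ‖(fderiv ℝ χ' z.2 - fderiv ℝ χ z.2) (W z)‖ ≤ B * (δ * M) := by
      have : ‖(fderiv ℝ χ' z.2 - fderiv ℝ χ z.2) (W z)‖ ≤ δ * M :=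
        (ContinuousLinearMap.le_opNorm _ _).trans
          (mul_le_mul (h1 _) (hWM z hz) (norm_nonneg _) hδ.le)
      exact mul_le_mul (hΘB _) this (norm_nonneg _) hB0
    linarith
  have : |J| ≤ 0 := by
    refine ge_of_tendsto (f := fun δ : ℝ => δ * (2 * B * M * V)) (x := 𝓝[>] (0 : ℝ)) ?_
      (eventually_mem_nhdsWithin.mono hbound)
    refine Tendsto.mono_left ?_ nhdsWithin_le_nhds
    have : Continuous fun δ : ℝ => δ * (2 * B * M * V) := by fun_prop
    simpa using this.tendsto 0
  exact abs_nonpos_iff.1 this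

/-! ### Boundary layer cutoffs -/

lemma exists_bound_deriv_smoothTransition :
    ∃ K, 0 ≤ K ∧ ∀ y, |deriv Real.smoothTransition y| ≤ K := by
  have hc : Continuous (deriv Real.smoothTransition) :=
    (Real.smoothTransition.contDiff (n := 1)).continuous_deriv (by norm_num)
  obtain ⟨K, hK⟩ := (isCompact_Icc (a := (0 : ℝ)) (b := 1)).exists_bound_of_continuousOn
    hc.continuousOn
  have hK0 : 0 ≤ K := (norm_nonneg _).trans (hK 0 ⟨le_rfl, zero_le_one⟩)
  refine ⟨K, hK0, fun y => ?_⟩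
  by_cases hy : y ∈ Icc (0 : ℝ) 1
  · exact hK y hy
  · have : deriv Real.smoothTransition y = 0 := by
      rw [mem_Icc, not_and_or, not_le, not_le] at hy
      rcases hy with hy | hy
      · have : Real.smoothTransition =ᶠ[𝓝 y] fun _ => (0 : ℝ) := by
          filter_upwards [Iio_mem_nhds hy] with w hw
          exact Real.smoothTransition.zero_of_nonpos (le_of_lt hw)
        rw [this.deriv_eq, deriv_const]
      · have : Real.smoothTransition =ᶠ[𝓝 y] fun _ => (1 : ℝ) := by
          filter_upwards [Ioi_mem_nhds hy] with w hw
          exact Real.smoothTransition.one_of_one_le (le_of_lt hw)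
        rw [this.deriv_eq, deriv_const]
    rw [this, abs_zero]
    exact hK0

/-- The cutoff function equal to `0` where `f ≥ -ε` and to `1` where `f ≤ -2ε`. -/
def layerCutoff {d : ℕ} (f : Euc d → ℝ) (ε : ℝ) (x : Euc d) : ℝ :=
  Real.smoothTransition (-f x / ε - 1)

lemma layerCutoff_contDiff {d : ℕ} {f : Euc d → ℝ} (hf : ContDiff ℝ 2 f) (ε : ℝ) :
    ContDiff ℝ 1 (layerCutoff f ε) := by
  have h1 : ContDiff ℝ 1 f := hf.of_le (by norm_num)
  exact (Real.smoothTransition.contDiff (n := 1)).comp ((h1.neg.div_const ε).sub contDiff_const)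

lemma layerCutoff_tsupport_subset {d : ℕ} {f : Euc d → ℝ} (hf : Continuous f) {ε : ℝ}
    (hε : 0 < ε) : tsupport (layerCutoff f ε) ⊆ {x | f x ≤ -ε} := by
  refine closure_minimal (fun x hx => ?_) (isClosed_le hf continuous_const)
  by_contra hn
  refine hx (Real.smoothTransition.zero_of_nonpos ?_)
  have hn' : -ε < f x := not_le.1 hn
  rw [sub_nonpos, div_le_one hε]
  linarith

lemma layerCutoff_eq_one {d : ℕ} {f : Euc d → ℝ} {ε : ℝ} (hε : 0 < ε) {x : Euc d}
    (hx : f x ≤ -(2 * ε)) : layerCutoff f ε x = 1 := by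
  refine Real.smoothTransition.one_of_one_le ?_
  rw [le_sub_iff_add_le, le_div_iff₀ hε]
  linarith

lemma abs_layerCutoff_le_one {d : ℕ} (f : Euc d → ℝ) (ε : ℝ) (x : Euc d) :
    |layerCutoff f ε x| ≤ 1 := by
  rw [layerCutoff, abs_of_nonneg (Real.smoothTransition.nonneg _)]
  exact Real.smoothTransition.le_one _

lemma fderiv_layerCutoff_eq_zero {d : ℕ} {f : Euc d → ℝ} (hf : Continuous f) {ε : ℝ}
    (hε : 0 < ε) {x : Euc d} (hx : f x < -(2 * ε)) : fderiv ℝ (layerCutoff f ε) x = 0 := by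
  have : layerCutoff f ε =ᶠ[𝓝 x] fun _ => (1 : ℝ) := by
    filter_upwards [hf.continuousAt.eventually_lt_const hx] with y hy
    exact layerCutoff_eq_one hε hy.le
  rw [this.fderiv_eq, fderiv_const_apply]

/-- Chain rule for the cutoff, evaluated along `w`: only the component of `w` along `∇f` matters. -/
lemma abs_fderiv_layerCutoff_le {d : ℕ} {f : Euc d → ℝ} (hf : ContDiff ℝ 2 f) {ε K : ℝ}
    (hε : 0 < ε) (hK : ∀ y, |deriv Real.smoothTransition y| ≤ K) (x w : Euc d) :
    |fderiv ℝ (layerCutoff f ε) x w| ≤ K / ε * |fderiv ℝ f x w| := by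
  have hd : HasFDerivAt f (fderiv ℝ f x) x := (hf.differentiable (by norm_num) x).hasFDerivAt
  have h1 : HasFDerivAt (fun x => -f x / ε - 1) (-(ε⁻¹ • fderiv ℝ f x)) x := by
    have := ((hd.const_smul ε⁻¹).neg).sub_const 1
    refine this.congr_of_eventuallyEq (Eventually.of_forall fun y => ?_)
    simp only [Pi.neg_apply, Pi.smul_apply, smul_eq_mul]
    ring
  have h2 : HasDerivAt Real.smoothTransition (deriv Real.smoothTransition (-f x / ε - 1))
      (-f x / ε - 1) :=
    ((Real.smoothTransition.contDiff (n := 1)).differentiable (by norm_num) _).hasDerivAt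
  have h3 := h2.comp_hasFDerivAt x h1
  have h4 : fderiv ℝ (layerCutoff f ε) x = _ := h3.fderiv
  rw [h4]
  simp only [smul_apply, neg_apply, smul_eq_mul,
    abs_mul, abs_neg]
  rw [abs_of_pos (inv_pos.2 hε), ← mul_assoc, div_eq_mul_inv K]
  exact mul_le_mul_of_nonneg_right
    (mul_le_mul_of_nonneg_right (hK _) (inv_pos.2 hε).le) (abs_nonneg _)

/-! ### Passage to the limit -/

/-- Core of the argument, for a bounded density `E` and a bounded flux `W` whose normal component
tends to `0` at each boundary point, at each time.  `Θ'` is an arbitrary bounded continuous function here;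
the link between `Θ` and `Θ'` is only used to verify `hloc`. -/
lemma integral_eq_zero_of_normal_trace {d : ℕ} {T : ℝ} {Ω : Set (Euc d)}
    (hΩbdd : Bornology.IsBounded Ω) (hΩopen : IsOpen Ω) {f : Euc d → ℝ} (hf : ContDiff ℝ 2 f)
    (hΩ : Ω = {x | f x < 0}) (hgrad : ∀ x ∈ frontier Ω, gradient f x ≠ 0)
    {E : ℝ × Euc d → ℝ} {W : ℝ × Euc d → Euc d}
    (hE : AEStronglyMeasurable E (volume.restrict (Ioo 0 T ×ˢ Ω)))
    (hW : AEStronglyMeasurable W (volume.restrict (Ioo 0 T ×ˢ Ω))) {M B : ℝ} (hM0 : 0 ≤ M)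
    (hEM : ∀ z ∈ Ioo 0 T ×ˢ Ω, |E z| ≤ M) (hWM : ∀ z ∈ Ioo 0 T ×ˢ Ω, ‖W z‖ ≤ M)
    {Θ Θ' : ℝ → ℝ} (hΘ : Continuous Θ) (hΘ' : Continuous Θ')
    (hΘB : ∀ t, |Θ t| ≤ B) (hΘB' : ∀ t, |Θ' t| ≤ B)
    (hloc : ∀ χ : Euc d → ℝ, ContDiff ℝ (⊤ : ℕ∞) χ → HasCompactSupport χ → tsupport χ ⊆ Ω →
      ∫ z in Ioo 0 T ×ˢ Ω, (Θ' z.1 * (χ z.2 * E z) + Θ z.1 * fderiv ℝ χ z.2 (W z)) = 0)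
    (htr : ∀ t ∈ Ioo 0 T, ∀ x₀ ∈ frontier Ω,
      Tendsto (fun x => fderiv ℝ f x₀ (W (t, x))) (𝓝[Ω] x₀) (𝓝 0)) :
    ∫ t in Ioo 0 T, Θ' t * ∫ x in Ω, E (t, x) = 0 := by
  have hB0 : 0 ≤ B := (abs_nonneg _).trans (hΘB 0)
  have hDf : Continuous (fderiv ℝ f) := hf.continuous_fderiv (by norm_num)
  have hmemΩ : ∀ x, x ∈ Ω ↔ f x < 0 := fun x => by rw [hΩ]; rfl
  obtain ⟨K, hK0, hK⟩ := exists_bound_deriv_smoothTransition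
  obtain ⟨C, ε₀, hε₀, hvol⟩ := layer_volume hΩbdd hΩopen hf hΩ hgrad
  obtain ⟨G, hG⟩ := hΩbdd.isCompact_closure.exists_bound_of_continuousOn hDf.continuousOn
  have hsmall : ∀ᶠ ε : ℝ in 𝓝[>] 0, 0 < ε ∧ 2 * ε < ε₀ := by
    filter_upwards [Ioo_mem_nhdsGT (half_pos hε₀)] with ε hε
    exact ⟨hε.1, by linarith [hε.2]⟩
  have hcut : ∀ ε : ℝ, 0 < ε → HasCompactSupport (layerCutoff f ε) ∧
      tsupport (layerCutoff f ε) ⊆ Ω := by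
    intro ε hε
    have hsub : tsupport (layerCutoff f ε) ⊆ Ω := fun x hx => (hmemΩ x).2
      (lt_of_le_of_lt (layerCutoff_tsupport_subset hf.continuous hε hx) (by linarith))
    exact ⟨hΩbdd.isCompact_closure.of_isClosed_subset (isClosed_tsupport _)
      (hsub.trans subset_closure), hsub⟩
  have hweak : ∀ ε : ℝ, 0 < ε → _ := fun ε hε =>
    weak_identity_of_contDiff_one hΩbdd hΩopen hE hW hM0 hEM hWM hΘ hΘ' hΘB hΘB' hloc
      (layerCutoff_contDiff hf ε) (hcut ε hε).1 (hcut ε hε).2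
  -- Fixed time: the factor `ε⁻¹` from the gradient of the cutoff cancels the volume of the layer.
  have hflux : ∀ ε : ℝ, 0 < ε → 2 * ε < ε₀ → ∀ t ∈ Ioo 0 T, ∀ κ : ℝ, 0 ≤ κ →
      (∀ x ∈ Ω, -(2 * ε) ≤ f x → |fderiv ℝ f x (W (t, x))| ≤ κ) →
      ‖∫ x in Ω, Θ t * fderiv ℝ (layerCutoff f ε) x (W (t, x))‖ ≤ 2 * B * K * C * κ := by
    intro ε hε hε' t ht κ hκ hb
    set L := {x | -(2 * ε) ≤ f x ∧ f x < 0} with hL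
    have hLΩ : L ⊆ Ω := fun x hx => (hmemΩ x).2 hx.2
    have heq : ∫ x in Ω, Θ t * fderiv ℝ (layerCutoff f ε) x (W (t, x)) =
        ∫ x in L, Θ t * fderiv ℝ (layerCutoff f ε) x (W (t, x)) := by
      refine setIntegral_eq_of_subset_of_forall_sdiff_eq_zero hΩopen.measurableSet hLΩ ?_
      intro x hx
      have hlt : f x < -(2 * ε) := by
        by_contra hn
        exact hx.2 ⟨not_lt.1 hn, (hmemΩ x).1 hx.1⟩
      rw [fderiv_layerCutoff_eq_zero hf.continuous hε hlt]
      simp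
    rw [heq]
    refine (norm_setIntegral_le_of_norm_le_const (C := B * (K / ε * κ))
      (hΩbdd.subset hLΩ).measure_lt_top fun x hx => ?_).trans ?_
    · rw [norm_mul]
      refine mul_le_mul (hΘB t) ?_ (norm_nonneg _) hB0
      refine (abs_fderiv_layerCutoff_le hf hε hK x _).trans ?_
      exact mul_le_mul_of_nonneg_left (hb x (hLΩ hx) hx.1) (by positivity)
    · calc B * (K / ε * κ) * volume.real L ≤ B * (K / ε * κ) * (C * (2 * ε)) :=
          mul_le_mul_of_nonneg_left (hvol (2 * ε) (by linarith) hε') (by positivity)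
        _ = _ := by field_simp
  -- The trace condition is uniform over the compact boundary for each fixed time.
  have hunif : ∀ t ∈ Ioo 0 T, ∀ κ > 0, ∃ c > 0, ∀ x ∈ Ω, -c ≤ f x →
      |fderiv ℝ f x (W (t, x))| ≤ κ := by
    intro t ht κ hκ
    have := exists_layer_subset hΩbdd hΩopen hf.continuous hΩ
      (U := {x | x ∈ Ω → |fderiv ℝ f x (W (t, x))| ≤ κ}) ?_
    · obtain ⟨c, hc, h⟩ := this
      exact ⟨c, hc, fun x hx hfx => h x hx hfx hx⟩
    · intro x₀ hx₀
      have h1 : Tendsto (fun x => (fderiv ℝ f x - fderiv ℝ f x₀) (W (t, x))) (𝓝[Ω] x₀) (𝓝 0) := by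
        refine squeeze_zero_norm' (a := fun x => ‖fderiv ℝ f x - fderiv ℝ f x₀‖ * M) ?_ ?_
        · filter_upwards [self_mem_nhdsWithin] with x hx
          exact (ContinuousLinearMap.le_opNorm _ _).trans
            (mul_le_mul_of_nonneg_left (hWM (t, x) ⟨ht, hx⟩) (norm_nonneg _))
        · have hc : Continuous fun x => ‖fderiv ℝ f x - fderiv ℝ f x₀‖ * M := by fun_prop
          have := (hc.tendsto x₀).mono_left (nhdsWithin_le_nhds (s := Ω))
          simpa using this
      have h2 := (h1.add (htr t ht x₀ hx₀)).norm
      simp only [add_zero, norm_zero] at h2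
      have h3 := h2.eventually_le_const hκ
      have h4 := eventually_nhdsWithin_iff.1 h3
      filter_upwards [h4] with x hx hxΩ
      have := hx hxΩ
      simpa [sub_apply] using this
  have lim1 : Tendsto (fun ε => ∫ z in Ioo 0 T ×ˢ Ω, Θ' z.1 * (layerCutoff f ε z.2 * E z))
      (𝓝[>] 0) (𝓝 (∫ z in Ioo 0 T ×ˢ Ω, Θ' z.1 * E z)) := by
    refine tendsto_integral_filter_of_dominated_convergence (fun _ => B * M) ?_ ?_ ?_ ?_
    · filter_upwards [hsmall] with ε hε
      exact (hweak ε hε.1).1.aestronglyMeasurable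
    · refine Eventually.of_forall fun ε => ae_restrict_of_forall_mem
        (measurableSet_Ioo.prod hΩopen.measurableSet) fun z hz => ?_
      rw [norm_mul, norm_mul]
      refine mul_le_mul (hΘB' _) ?_ (by positivity) hB0
      calc ‖layerCutoff f ε z.2‖ * ‖E z‖ ≤ 1 * M :=
            mul_le_mul (abs_layerCutoff_le_one f ε _) (hEM z hz) (norm_nonneg _) zero_le_one
        _ = M := one_mul M
    · exact integrableOn_const (measure_cylinder_ne_top hΩbdd T)
    · refine ae_restrict_of_forall_mem
        (measurableSet_Ioo.prod hΩopen.measurableSet) fun z hz => ?_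
      have hneg : f z.2 < 0 := (hmemΩ _).1 hz.2
      refine tendsto_const_nhds.congr' ?_
      filter_upwards [Ioo_mem_nhdsGT (show (0 : ℝ) < -f z.2 / 2 by linarith)] with ε hε
      rw [layerCutoff_eq_one hε.1 (by linarith [hε.2]), one_mul]
  have lim2 : Tendsto (fun ε => ∫ z in Ioo 0 T ×ˢ Ω,
      Θ z.1 * fderiv ℝ (layerCutoff f ε) z.2 (W z)) (𝓝[>] 0) (𝓝 0) := by
    have hF : Tendsto (fun ε => ∫ t in Ioo 0 T, ∫ x in Ω,
        Θ t * fderiv ℝ (layerCutoff f ε) x (W (t, x))) (𝓝[>] 0)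
        (𝓝 (∫ t in Ioo 0 T, (0 : ℝ))) := by
      refine tendsto_integral_filter_of_dominated_convergence
        (fun _ => 2 * B * K * C * (|G| * M)) ?_ ?_ ?_ ?_
      · filter_upwards [hsmall] with ε hε
        have hi := (hweak ε hε.1).2.1
        rw [IntegrableOn, Measure.volume_eq_prod, ← Measure.prod_restrict] at hi
        exact hi.integral_prod_left.aestronglyMeasurable
      · filter_upwards [hsmall] with ε hε
        refine ae_restrict_of_forall_mem measurableSet_Ioo fun t ht => ?_
        refine hflux ε hε.1 hε.2 t ht _ (by positivity) fun x hx _ => ?_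
        refine ((fderiv ℝ f x).le_opNorm _).trans ?_
        exact mul_le_mul ((hG x (subset_closure hx)).trans (le_abs_self G))
          (hWM (t, x) ⟨ht, hx⟩) (norm_nonneg _) (abs_nonneg _)
      · exact integrableOn_const (by simp)
      · refine ae_restrict_of_forall_mem measurableSet_Ioo fun t ht => ?_
        rw [Metric.tendsto_nhds]
        intro η hη
        set D := |2 * B * K * C| + 1 with hD
        have hDpos : 0 < D := by positivity
        obtain ⟨c, hc, hcb⟩ := hunif t ht (η / (2 * D)) (by positivity)
        filter_upwards [hsmall, Ioo_mem_nhdsGT (half_pos hc)] with ε hε hεc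
        rw [dist_zero_right]
        have h1 := hflux ε hε.1 hε.2 t ht (η / (2 * D)) (by positivity)
          fun x hx hfx => hcb x hx (by linarith [hεc.2])
        have h2 : 2 * B * K * C * (η / (2 * D)) ≤ D * (η / (2 * D)) :=
          mul_le_mul_of_nonneg_right (by linarith [le_abs_self (2 * B * K * C)]) (by positivity)
        have h3 : D * (η / (2 * D)) = η / 2 := by field_simp
        linarith
    rw [integral_zero] at hF
    refine hF.congr' ?_
    filter_upwards [hsmall] with ε hε
    have hi := (hweak ε hε.1).2.1
    rw [Measure.volume_eq_prod] at hi ⊢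
    exact (setIntegral_prod _ hi).symm
  have lim3 := lim1.add lim2
  have hzero : ∫ z in Ioo 0 T ×ˢ Ω, Θ' z.1 * E z = 0 := by
    rw [add_zero] at lim3
    refine tendsto_nhds_unique lim3 (tendsto_const_nhds.congr' ?_)
    filter_upwards [hsmall] with ε hε
    obtain ⟨i1, i2, h⟩ := hweak ε hε.1
    exact ((integral_add i1 i2).symm.trans h).symm
  have hint : IntegrableOn (fun z => Θ' z.1 * E z) (Ioo 0 T ×ˢ Ω) := by
    refine integrableOn_cylinder (M := B * M) hΩbdd hΩopen
      ((hΘ'.comp continuous_fst).aestronglyMeasurable.mul hE) fun z hz => ?_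
    rw [abs_mul]
    exact mul_le_mul (hΘB' _) (hEM z hz) (abs_nonneg _) hB0
  rw [Measure.volume_eq_prod] at hzero hint
  rw [setIntegral_prod _ hint] at hzero
  simpa only [integral_const_mul] using hzero

/-! ### Tensor product test functions -/

lemma isTestFunOn_tensor {d : ℕ} {T : ℝ} {Ω : Set (Euc d)} {Θ : ℝ → ℝ} {χ : Euc d → ℝ}
    (hΘ : ContDiff ℝ (⊤ : ℕ∞) Θ) (hΘc : HasCompactSupport Θ) (hΘs : tsupport Θ ⊆ Ioo 0 T)
    (hχ : ContDiff ℝ (⊤ : ℕ∞) χ) (hχc : HasCompactSupport χ) (hχs : tsupport χ ⊆ Ω) :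
    IsTestFunOn T Ω (fun z : ℝ × Euc d => Θ z.1 * χ z.2) := by
  have hsub : tsupport (fun z : ℝ × Euc d => Θ z.1 * χ z.2) ⊆ tsupport Θ ×ˢ tsupport χ := by
    refine closure_minimal (fun z hz => ?_) ((isClosed_tsupport _).prod (isClosed_tsupport _))
    exact ⟨subset_tsupport _ (left_ne_zero_of_mul hz), subset_tsupport _ (right_ne_zero_of_mul hz)⟩
  refine ⟨(hΘ.comp contDiff_fst).mul (hχ.comp contDiff_snd), ?_,
    hsub.trans (prod_mono hΘs hχs)⟩
  exact (hΘc.isCompact.prod hχc.isCompact).of_isClosed_subset (isClosed_tsupport _) hsub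

lemma fderiv_tensor_apply {d : ℕ} {Θ : ℝ → ℝ} {χ : Euc d → ℝ}
    (hΘ : Differentiable ℝ Θ) (hχ : Differentiable ℝ χ) (z w : ℝ × Euc d) :
    fderiv ℝ (fun z : ℝ × Euc d => Θ z.1 * χ z.2) z w =
      deriv Θ z.1 * w.1 * χ z.2 + Θ z.1 * fderiv ℝ χ z.2 w.2 := by
  have h0 : HasFDerivAt (Prod.fst : ℝ × Euc d → ℝ) (ContinuousLinearMap.fst ℝ ℝ (Euc d)) z :=
    hasFDerivAt_fst
  have h1 : HasFDerivAt (fun z : ℝ × Euc d => Θ z.1) _ z :=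
    (hΘ z.1).hasDerivAt.comp_hasFDerivAt z h0
  have h2 : HasFDerivAt (fun z : ℝ × Euc d => χ z.2) _ z :=
    (hχ z.2).hasFDerivAt.comp z hasFDerivAt_snd
  rw [(h1.fun_mul h2).fderiv]
  simp only [add_apply, smul_apply, ContinuousLinearMap.comp_apply, ContinuousLinearMap.coe_fst',
    ContinuousLinearMap.coe_snd', smul_eq_mul]
  ring

lemma sum_apply_single_mul {d : ℕ} (A : Euc d →L[ℝ] ℝ) (w : Euc d) :
    ∑ i, A (EuclideanSpace.single i (1 : ℝ)) * w i = A w := by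
  conv_rhs => rw [← (EuclideanSpace.basisFun (Fin d) ℝ).sum_repr w]
  simp [map_sum, mul_comm]

end Helpers

/-- **Global (in space) energy conservation on a bounded `C²` domain**
(Theorem 5.1 of Akramov-Dębiec-Skipper-Wiedemann, first part).
Let `Ω ⊂ ℝ^d` be a bounded domain with `C²` boundary and let `(ρ,u)` be a bounded
distributional solution of isentropic compressible Euler in `(0,T) × Ω` satisfying the
local energy equality, with `ρ ∈ L^∞((0,T) × ∂Ω)` and normal trace `u·n` continuous at
the boundary (with boundary value `0`).  Then for every `Θ ∈ C_c^∞(0,T)`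
`∫_0^T ∂ₜΘ(t) ∫_Ω (½ρ|u|² + P(ρ)) dx dt = 0`. -/
theorem energy_conservation_bounded_domain
    {d : ℕ} (hd : 1 ≤ d) {T : ℝ} (hT : 0 < T)
    (Ω : Set (Euc d)) (hΩopen : IsOpen Ω) (hΩbdd : Bornology.IsBounded Ω)
    (hΩconn : IsConnected Ω)
    (f : Euc d → ℝ) (hf : IsC2DefiningFunction Ω f)
    (pr : ℝ → ℝ) (hpr : Continuous pr)
    (ρ : ℝ × Euc d → ℝ) (u : ℝ × Euc d → Euc d)
    -- `(ρ,u)` is a distributional solution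
    (hsol : IsEulerSolutionOn T Ω pr ρ u)
    -- conditions under which the local energy equality holds:
    (hmeasρ : AEStronglyMeasurable ρ (volume.restrict (Ioo 0 T ×ˢ Ω)))
    (hmeasu : AEStronglyMeasurable u (volume.restrict (Ioo 0 T ×ˢ Ω)))
    (hbdd : ∃ C : ℝ, ∀ z ∈ Ioo 0 T ×ˢ Ω, |ρ z| ≤ C ∧ ‖u z‖ ≤ C)
    -- the local energy equality itself
    (hloc : LocalEnergyEquality T Ω pr ρ u)
    -- `ρ ∈ L^∞((0,T) × ∂Ω)`
    (hρbdry : ∃ C : ℝ, ∀ t ∈ Ioo 0 T, ∀ x ∈ frontier Ω, |ρ (t, x)| ≤ C)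
    -- `u · n` is continuous at the boundary, with boundary value `0`
    (hun : ∀ t ∈ Ioo 0 T, ∀ x₀ ∈ frontier Ω,
      Filter.Tendsto (fun x : Euc d => ⟪u (t, x), outerNormal f x₀⟫)
        (nhdsWithin x₀ Ω) (nhds 0)) :
    ∀ Θ : ℝ → ℝ, ContDiff ℝ (⊤ : ℕ∞) Θ → HasCompactSupport Θ → tsupport Θ ⊆ Ioo 0 T →
      ∫ t in Ioo 0 T,
        deriv Θ t * ∫ x in Ω, (2⁻¹ * ρ (t, x) * ‖u (t, x)‖ ^ 2 + Ppot pr (ρ (t, x)))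
        = 0 := by
  intro Θ hΘ hΘc hΘs
  obtain ⟨hf2, hΩ, -, hgrad⟩ := hf
  obtain ⟨C, hC⟩ := hbdd
  obtain ⟨MP, hMP⟩ := exists_bound_Ppot hpr C
  obtain ⟨Mp, hMp⟩ := (isCompact_Icc (a := -C) (b := C)).exists_bound_of_continuousOn
    hpr.continuousOn
  have hΘ1 : ContDiff ℝ 1 Θ := hΘ.of_le (by exact_mod_cast le_top)
  have hΘ' : Continuous (deriv Θ) := hΘ1.continuous_deriv (by norm_num)
  obtain ⟨B₁, hB₁⟩ := hΘc.exists_bound_of_continuous hΘ.continuous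
  obtain ⟨B₂, hB₂⟩ := hΘc.deriv.exists_bound_of_continuous hΘ'
  set E : ℝ × Euc d → ℝ := fun z => 2⁻¹ * ρ z * ‖u z‖ ^ 2 + Ppot pr (ρ z) with hE
  set H : ℝ × Euc d → ℝ := fun z => 2⁻¹ * ρ z * ‖u z‖ ^ 2 + pr (ρ z) + Ppot pr (ρ z) with hH
  have hPm : AEStronglyMeasurable (fun z => Ppot pr (ρ z)) (volume.restrict (Ioo 0 T ×ˢ Ω)) :=
    ((measurable_Ppot hpr).comp_aemeasurable hmeasρ.aemeasurable).aestronglyMeasurable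
  have hpm : AEStronglyMeasurable (fun z => pr (ρ z)) (volume.restrict (Ioo 0 T ×ˢ Ω)) :=
    hpr.comp_aestronglyMeasurable hmeasρ
  have hkm : AEStronglyMeasurable (fun z => 2⁻¹ * ρ z * ‖u z‖ ^ 2)
      (volume.restrict (Ioo 0 T ×ˢ Ω)) :=
    (hmeasρ.const_mul _).mul (hmeasu.norm.pow 2)
  have hkin : ∀ z ∈ Ioo 0 T ×ˢ Ω, |2⁻¹ * ρ z * ‖u z‖ ^ 2| ≤ |C| * |C| ^ 2 := by
    intro z hz
    have h1 := (hC z hz).1.trans (le_abs_self C)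
    have h2 := (hC z hz).2.trans (le_abs_self C)
    rw [abs_mul, abs_mul, abs_of_pos (by norm_num : (0 : ℝ) < 2⁻¹), abs_of_nonneg (sq_nonneg ‖u z‖)]
    have h3 : 2⁻¹ * |ρ z| ≤ |C| := by linarith [abs_nonneg (ρ z)]
    exact mul_le_mul h3 (pow_le_pow_left₀ (norm_nonneg _) h2 2) (sq_nonneg _) (abs_nonneg _)
  have hP : ∀ z ∈ Ioo 0 T ×ˢ Ω, |Ppot pr (ρ z)| ≤ |MP| := fun z hz =>
    (hMP _ (hC z hz).1).trans (le_abs_self _)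
  have hp : ∀ z ∈ Ioo 0 T ×ˢ Ω, |pr (ρ z)| ≤ |Mp| := fun z hz =>
    (hMp _ (abs_le.1 (hC z hz).1)).trans (le_abs_self _)
  set M := |C| * |C| ^ 2 + |Mp| + |MP| with hM
  have hEM : ∀ z ∈ Ioo 0 T ×ˢ Ω, |E z| ≤ M := fun z hz =>
    (abs_add_le _ _).trans (by linarith [hkin z hz, hP z hz, abs_nonneg Mp])
  have hHM : ∀ z ∈ Ioo 0 T ×ˢ Ω, |H z| ≤ M := fun z hz =>
    (abs_add_three _ _ _).trans (by linarith [hkin z hz, hP z hz, hp z hz])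
  have hM0 : 0 ≤ M := by positivity
  refine integral_eq_zero_of_normal_trace (E := E) (W := fun z => H z • u z) (M := M * (1 + |C|))
    (B := max B₁ B₂) hΩbdd hΩopen hf2 hΩ hgrad (hkm.add hPm) (((hkm.add hpm).add hPm).smul hmeasu)
    (by positivity) (fun z hz => ?_) (fun z hz => ?_) hΘ.continuous hΘ'
    (fun t => (hB₁ t).trans (le_max_left _ _)) (fun t => (hB₂ t).trans (le_max_right _ _)) ?_ ?_
  · exact (hEM z hz).trans (le_mul_of_one_le_right hM0 (by linarith [abs_nonneg C]))
  · rw [norm_smul]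
    exact mul_le_mul (hHM z hz) (by linarith [(hC z hz).2, le_abs_self C]) (norm_nonneg _) hM0
  · intro χ hχ hχc hχs
    have hdΘ : Differentiable ℝ Θ := hΘ1.differentiable (by norm_num)
    have hdχ : Differentiable ℝ χ := hχ.differentiable (by simp)
    have h := hloc _ (isTestFunOn_tensor hΘ hΘc hΘs hχ hχc hχs)
    refine Eq.trans ?_ h
    refine integral_congr_ae (Filter.Eventually.of_forall fun z => ?_)
    simp only [fderiv_tensor_apply hdΘ hdχ, map_zero, mul_zero, add_zero, zero_mul, zero_add,
      mul_one]
    rw [← sum_apply_single_mul (fderiv ℝ χ z.2) (H z • u z), Finset.mul_sum, hE, hH]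
    congr 1
    · ring
    · refine Finset.sum_congr rfl fun i _ => ?_
      simp only [PiLp.smul_apply, smul_eq_mul]
      ring
  · intro t ht x₀ hx₀
    have hg : 0 < ‖gradient f x₀‖ := norm_pos_iff.2 (hgrad x₀ hx₀)
    have hfd : ∀ w : Euc d,
        fderiv ℝ f x₀ w = ‖gradient f x₀‖ * ⟪w, outerNormal f x₀⟫ := by
      intro w
      rw [outerNormal, real_inner_smul_right, real_inner_comm, ← mul_assoc,
        mul_inv_cancel₀ hg.ne', one_mul, gradient, InnerProductSpace.toDual_symm_apply]
    have hlim := (hun t ht x₀ hx₀).norm.const_mul (M * ‖gradient f x₀‖)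
    rw [norm_zero, mul_zero] at hlim
    refine squeeze_zero_norm' (f := fun x => fderiv ℝ f x₀ (H (t, x) • u (t, x))) ?_ hlim
    filter_upwards [self_mem_nhdsWithin] with x hx
    rw [map_smul, hfd, smul_eq_mul, norm_mul, norm_mul, norm_norm, mul_assoc]
    exact mul_le_mul_of_nonneg_right (hHM (t, x) ⟨ht, hx⟩) (by positivity)

end
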